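/- Let Q : (0, ∞) → ℝ be the strictly quasiconvex generator Q(x) = log x, and let 0 < θ ≤ θ'. Then, as α tends to 1 from the left, the scaled skewed quasiconvex Jensen divergence (1/(α(1−α)))·(max(log θ, log θ') − log((1−α)·θ + α·θ')) tends to 1 − θ/θ'; that is, the quasiconvex Bregman divergence for the logarithmic generator is 1 − θ/θ' when θ ≤ θ'. -/

import Mathlib

open Filter Set Real

/-!
When `Q θ ≤ Q θ'`, the maximum in the Jensen divergence is the value of `Q` at the endpoint `α = 1`
of the segment from `θ` to `θ'`. Dividing by `1 - α` then gives a difference quotient of `Q` along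
this segment, and the remaining factor `1 / α` tends to `1`, so the limit is the derivative of `Q`
at `θ'` in the direction `θ' - θ`. For `Q = log` this derivative is `(θ' - θ) / θ'`.
-/

open scoped Topology

section Segment

variable {𝕜 F : Type*} [NontriviallyNormedField 𝕜] [NormedAddCommGroup F] [NormedSpace 𝕜 F]

theorem tendsto_one_div_mul_one_sub_smul_sub_of_hasDerivAt {f : 𝕜 → F} {f' : F}
    (hf : HasDerivAt f f' 1) :
    Tendsto (fun α => (1 / (α * (1 - α))) • (f 1 - f α)) (𝓝[≠] 1) (𝓝 f') := by
  have hinv : Tendsto (fun α : 𝕜 => α⁻¹) (𝓝[≠] 1) (𝓝 1) := by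
    simpa using (tendsto_inv₀ (one_ne_zero (α := 𝕜))).mono_left nhdsWithin_le_nhds
  have hslope : Tendsto (fun α => α⁻¹ • slope f 1 α) (𝓝[≠] 1) (𝓝 f') := by
    simpa using hinv.smul hf.tendsto_slope
  refine hslope.congr fun α => ?_
  rw [slope_comm, slope_def_module, smul_smul, one_div, mul_inv]

theorem hasDerivAt_comp_segment_one {E : Type*} [AddCommGroup E] [Module 𝕜 E]
    {f : E → F} {f' : F} {x y : E} (hf : HasLineDerivAt 𝕜 f f' y (y - x)) :
    HasDerivAt (fun α : 𝕜 => f ((1 - α) • x + α • y)) f' 1 := by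
  have hline : HasDerivAt (fun t : 𝕜 => f (y + t • (y - x))) f' (1 - 1) := by
    rwa [sub_self]
  have hsegment (α : 𝕜) : y + (α - 1) • (y - x) = (1 - α) • x + α • y := by module
  simpa only [hsegment] using hline.comp_sub_const 1 1

end Segment

section JensenDiv

variable {E : Type*} [AddCommGroup E] [Module ℝ E]

/-- The `α`-skewed quasiconvex Jensen divergence `J_Q^α(θ : θ')`; divided by `α * (1 - α)`, it tends
to the quasiconvex Bregman divergence of `Q` as `α` tends to `1`. The generator `Q` is a total
function, and `α` may be any real number. -/
def quasiconvexJensenDiv (Q : E → ℝ) (α : ℝ) (θ θ' : E) : ℝ :=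
  max (Q θ) (Q θ') - Q ((1 - α) • θ + α • θ')

theorem tendsto_quasiconvexJensenDiv_of_hasLineDerivAt {Q : E → ℝ} {Q' : ℝ} {θ θ' : E}
    (hle : Q θ ≤ Q θ') (hQ : HasLineDerivAt ℝ Q Q' θ' (θ' - θ)) :
    Tendsto (fun α => (1 / (α * (1 - α))) * quasiconvexJensenDiv Q α θ θ') (𝓝[≠] 1) (𝓝 Q') := by
  simpa [quasiconvexJensenDiv, max_eq_right hle] using
    tendsto_one_div_mul_one_sub_smul_sub_of_hasDerivAt (hasDerivAt_comp_segment_one hQ)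

end JensenDiv

theorem hasLineDerivAt_log {x : ℝ} (hx : x ≠ 0) (v : ℝ) :
    HasLineDerivAt ℝ log (v / x) x v := by
  simpa [div_eq_mul_inv] using (hasDerivAt_log hx).hasFDerivAt.hasLineDerivAt v

theorem quasiconvex_bregman_log_generator
    (θ θ' : ℝ) (hθ : 0 < θ) (hle : θ ≤ θ') :
    Tendsto
      (fun α : ℝ =>
        (1 / (α * (1 - α))) * (max (Real.log θ) (Real.log θ')
          - Real.log ((1 - α) * θ + α * θ')))
      (nhdsWithin 1 (Set.Ioo (0 : ℝ) 1))
      (nhds (1 - θ / θ')) := by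
  have hθ' : θ' ≠ 0 := (hθ.trans_le hle).ne'
  have hderiv : HasLineDerivAt ℝ log (1 - θ / θ') θ' (θ' - θ) := by
    simpa only [sub_div, div_self hθ'] using hasLineDerivAt_log hθ' (θ' - θ)
  have hne : Ioo (0 : ℝ) 1 ⊆ {1}ᶜ := fun _ hα => hα.2.ne
  exact (tendsto_quasiconvexJensenDiv_of_hasLineDerivAt (log_le_log hθ hle) hderiv).mono_left
    (nhdsWithin_mono 1 hne)
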